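/- arXiv:1003.2170 — 2 statements merged into one kernel-verified Lean document; each statement's English description precedes it below -/
import Mathlib

section
/- With α = ln(1+√2), the improper integral ∫_α^∞ [u − arcosh(sinh u)] du equals π²/16 − (1/2)·ln²(1+√2). -/
/-- The inverse hyperbolic cosine on [1, ∞): arcosh x = ln (x + √(x² − 1)). -/
noncomputable def arcosh (x : ℝ) : ℝ := Real.log (x + Real.sqrt (x ^ 2 - 1))

/-!
The substitution `s = u + v`, `w = u - v` with `v = arcosh (sinh u)` turns `cosh v = sinh u` into
the symmetric relation `sinh s * sinh w = 1`, because
`sinh (u + v) * sinh (u - v) = sinh u ^ 2 - cosh v ^ 2 + 1`. Writing `w = w(s)` and `α = arsinh 1`,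
which is the fixed point of `w`, the integral becomes
`∫_α^∞ w d((s + w) / 2) = (1/2) ∫_α^∞ w ds - α² / 4`.
The region under the graph of `w` is symmetric about the diagonal, so
`∫_0^∞ w ds = 2 ∫_α^∞ w ds + α²`, and expanding `w` in powers of `exp (-s)` gives
`∫_0^∞ w ds = 2 ∑ 1 / (2k + 1)² = π² / 4`.
-/

open Set Filter MeasureTheory Topology
open Real hiding arcosh

section InversePair

variable {f g : ℝ → ℝ} {a b : ℝ}

lemma integral_Ioi_eq_integral_max_sub (hf : IntegrableOn f (Ioi a))
    (hf0 : ∀ s ∈ Ioi a, 0 ≤ f s) (hfg : ∀ s ∈ Ioi a, ∀ t ∈ Ioi (0 : ℝ), t < f s ↔ s < g t) :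
    ∫ s in Ioi a, f s = ∫ t in Ioi 0, max (g t - a) 0 := by
  rw [hf.integral_eq_integral_meas_lt (ae_restrict_of_forall_mem measurableSet_Ioi hf0)]
  refine setIntegral_congr_fun measurableSet_Ioi fun t ht ↦ ?_
  have superlevel : {s | t < f s} ∩ Ioi a = Ioo a (g t) := by
    ext s
    exact ⟨fun ⟨hts, hs⟩ ↦ ⟨hs, (hfg s hs t ht).1 hts⟩, fun ⟨hs, hst⟩ ↦ ⟨(hfg s hs t ht).2 hst, hs⟩⟩
  rw [measureReal_restrict_apply' measurableSet_Ioi, superlevel, volume_real_Ioo]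

lemma integral_Ioi_zero_eq_add_integral_Ioi_add_mul (ha : 0 < a) (hb : 0 < b)
    (hf : IntegrableOn f (Ioi 0)) (hg : IntegrableOn g (Ioi b)) (hg0 : ∀ t ∈ Ioi b, 0 ≤ g t)
    (hfg : ∀ s ∈ Ioi (0 : ℝ), ∀ t ∈ Ioi (0 : ℝ), t < f s ↔ s < g t) (hfa : f a = b)
    (hgb : g b = a) :
    ∫ s in Ioi 0, f s = (∫ s in Ioi a, f s) + (∫ t in Ioi b, g t) + a * b := by
  have hf_Ioc : IntegrableOn f (Ioc 0 a) := hf.mono_set Ioc_subset_Ioi_self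
  have b_le : ∀ s ∈ Ioc 0 a, b ≤ f s := by
    rintro s ⟨hs, hsa⟩
    obtain rfl | hsa := hsa.eq_or_lt
    · exact hfa.ge
    · exact ((hfg s hs b hb).2 (hgb ▸ hsa)).le
  have le_b : ∀ s ∈ Ioi a, f s ≤ b := fun s hs ↦
    not_lt.1 fun hbs ↦ (hgb ▸ (hfg s (ha.trans hs) b hb).1 hbs).not_gt hs
  have tail_g : ∫ t in Ioi b, g t = (∫ s in Ioc 0 a, f s) - a * b :=
    calc ∫ t in Ioi b, g t
        = ∫ s in Ioi 0, max (f s - b) 0 :=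
          integral_Ioi_eq_integral_max_sub hg hg0 fun t ht s hs ↦ (hfg s hs t (hb.trans ht)).symm
      _ = ∫ s in Ioc 0 a, max (f s - b) 0 :=
          setIntegral_eq_of_subset_of_forall_sdiff_eq_zero measurableSet_Ioi Ioc_subset_Ioi_self
            fun s hs ↦ max_eq_right <| sub_nonpos.2 <|
              le_b s <| not_le.1 fun hsa ↦ hs.2 ⟨hs.1, hsa⟩
      _ = ∫ s in Ioc 0 a, (f s - b) :=
          setIntegral_congr_fun measurableSet_Ioc fun s hs ↦ max_eq_left (sub_nonneg.2 (b_le s hs))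
      _ = (∫ s in Ioc 0 a, f s) - a * b := by
          rw [integral_sub hf_Ioc (integrable_const b), setIntegral_const,
            volume_real_Ioc_of_le ha.le, sub_zero, smul_eq_mul]
  have split : ∫ s in Ioi 0, f s = (∫ s in Ioc 0 a, f s) + ∫ s in Ioi a, f s := by
    rw [← Ioc_union_Ioi_eq_Ioi ha.le, setIntegral_union (Ioc_disjoint_Ioi le_rfl)
      measurableSet_Ioi hf_Ioc (hf.mono_set (Ioi_subset_Ioi ha.le))]
  rw [split, tail_g]
  ring

end InversePair

lemma hasSum_one_div_odd_sq : HasSum (fun k : ℕ ↦ 1 / (2 * (k : ℝ) + 1) ^ 2) (π ^ 2 / 8) := by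
  have even : HasSum (fun k : ℕ ↦ 1 / ((2 * k : ℕ) : ℝ) ^ 2) (π ^ 2 / 24) := by
    convert! hasSum_zeta_two.mul_left (1 / 4) using 1
    · ext k
      push_cast
      ring
    · ring
  have odd : Summable fun k : ℕ ↦ 1 / ((2 * k + 1 : ℕ) : ℝ) ^ 2 :=
    hasSum_zeta_two.summable.comp_injective (i := fun k : ℕ ↦ 2 * k + 1) fun _ _ h ↦ by
      simpa using h
  have total := (even.even_add_odd (f := fun n : ℕ ↦ 1 / (n : ℝ) ^ 2) odd.hasSum).unique
    hasSum_zeta_two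
  convert! odd.hasSum using 1
  · push_cast
    rfl
  · linarith

lemma arsinh_one_pos : 0 < arsinh 1 := arsinh_pos_iff.2 one_pos

lemma one_lt_sinh {s : ℝ} (hs : arsinh 1 < s) : 1 < sinh s := by
  simpa only [sinh_arsinh] using sinh_lt_sinh.2 hs

/-- The function `s ↦ arsinh (1 / sinh s)`, whose graph over `(0, ∞)` is the curve
`sinh s * sinh w = 1`. In hyperbolic geometry it is the half-width of the standard collar around
a closed geodesic of length `2 * s`. At `s = 0` the value is the junk value `0`. -/
noncomputable def collarWidth (s : ℝ) : ℝ := arsinh (sinh s)⁻¹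

section CollarWidth

variable {s t w : ℝ}

lemma sinh_collarWidth (s : ℝ) : sinh (collarWidth s) = (sinh s)⁻¹ := sinh_arsinh _

lemma collarWidth_pos (hs : 0 < s) : 0 < collarWidth s :=
  arsinh_pos_iff.2 (inv_pos.2 (sinh_pos_iff.2 hs))

lemma collarWidth_eq_of_sinh_mul_sinh_eq_one (h : sinh s * sinh w = 1) : collarWidth s = w := by
  rw [collarWidth, ← eq_inv_of_mul_eq_one_right h, arsinh_sinh]

lemma collarWidth_arsinh_one : collarWidth (arsinh 1) = arsinh 1 :=
  collarWidth_eq_of_sinh_mul_sinh_eq_one (by rw [sinh_arsinh, one_mul])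

lemma lt_collarWidth_iff (hs : 0 < s) : t < collarWidth s ↔ sinh s * sinh t < 1 := by
  rw [← sinh_lt_sinh, sinh_collarWidth, ← mul_one (sinh s)⁻¹,
    lt_inv_mul_iff₀ (sinh_pos_iff.2 hs)]

lemma lt_collarWidth_comm (hs : 0 < s) (ht : 0 < t) : t < collarWidth s ↔ s < collarWidth t := by
  rw [lt_collarWidth_iff hs, lt_collarWidth_iff ht, mul_comm]

lemma collarWidth_lt_self (hs : arsinh 1 < s) : collarWidth s < s := by
  rw [← sinh_lt_sinh, sinh_collarWidth]
  exact (inv_lt_one_of_one_lt₀ (one_lt_sinh hs)).trans (one_lt_sinh hs)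

lemma collarWidth_eq_log_sub_log (hs : 0 < s) :
    collarWidth s = log (1 + exp (-s)) - log (1 - exp (-s)) := by
  have hsub : 0 < 1 - exp (-s) := sub_pos.2 (exp_lt_one_iff.2 (neg_lt_zero.2 hs))
  have hadd : 0 < 1 + exp (-s) := by positivity
  refine collarWidth_eq_of_sinh_mul_sinh_eq_one ?_
  rw [← log_div hadd.ne' hsub.ne', sinh_log (div_pos hadd hsub), sinh_eq,
    ← inv_inv (exp s), ← exp_neg]
  field_simp
  ring

lemma hasSum_collarWidth (hs : 0 < s) :
    HasSum (fun k : ℕ ↦ 2 / (2 * (k : ℝ) + 1) * exp (-(2 * k + 1) * s)) (collarWidth s) := by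
  have abs_exp_lt_one : |exp (-s)| < 1 := by
    rw [abs_exp]
    exact exp_lt_one_iff.2 (neg_lt_zero.2 hs)
  rw [collarWidth_eq_log_sub_log hs]
  convert! hasSum_log_sub_log_of_abs_lt_one abs_exp_lt_one using 2 with k
  rw [← exp_nat_mul]
  push_cast
  ring_nf

lemma integral_Ioi_zero_collarWidth : ∫ s in Ioi 0, collarWidth s = π ^ 2 / 4 := by
  set F : ℕ → ℝ → ℝ := fun k s ↦ 2 / (2 * (k : ℝ) + 1) * exp (-(2 * k + 1) * s)
  have rate_neg (k : ℕ) : -(2 * (k : ℝ) + 1) < 0 := neg_lt_zero.2 (by positivity)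
  have F_integrable (k : ℕ) : IntegrableOn (F k) (Ioi 0) :=
    (integrableOn_exp_mul_Ioi (rate_neg k) 0).const_mul _
  have F_integral (k : ℕ) : ∫ s in Ioi 0, F k s = 2 * (1 / (2 * (k : ℝ) + 1) ^ 2) := by
    rw [integral_const_mul, integral_exp_mul_Ioi (rate_neg k), mul_zero, exp_zero]
    field_simp
  have F_norm (k : ℕ) : ∫ s in Ioi 0, ‖F k s‖ = ∫ s in Ioi 0, F k s :=
    integral_congr_ae <| .of_forall fun s ↦ norm_of_nonneg (by positivity)
  have sum_integral : HasSum (fun k ↦ ∫ s in Ioi 0, F k s) (2 * (π ^ 2 / 8)) := by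
    simp only [F_integral]
    exact hasSum_one_div_odd_sq.mul_left 2
  calc ∫ s in Ioi 0, collarWidth s
      = ∫ s in Ioi 0, ∑' k, F k s :=
        setIntegral_congr_fun measurableSet_Ioi fun s hs ↦ (hasSum_collarWidth hs).tsum_eq.symm
    _ = 2 * (π ^ 2 / 8) :=
        (hasSum_integral_of_summable_integral_norm F_integrable
          (by simpa only [F_norm] using sum_integral.summable)).unique sum_integral
    _ = π ^ 2 / 4 := by ring

lemma integrableOn_Ioi_zero_collarWidth : IntegrableOn collarWidth (Ioi 0) :=
  .of_integral_ne_zero (by rw [integral_Ioi_zero_collarWidth]; positivity)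

lemma integrableOn_Ioi_arsinh_one_collarWidth : IntegrableOn collarWidth (Ioi (arsinh 1)) :=
  integrableOn_Ioi_zero_collarWidth.mono_set (Ioi_subset_Ioi arsinh_one_pos.le)

lemma integral_Ioi_arsinh_one_collarWidth :
    ∫ s in Ioi (arsinh 1), collarWidth s = π ^ 2 / 8 - arsinh 1 ^ 2 / 2 := by
  have symmetric := integral_Ioi_zero_eq_add_integral_Ioi_add_mul arsinh_one_pos arsinh_one_pos
    integrableOn_Ioi_zero_collarWidth integrableOn_Ioi_arsinh_one_collarWidth
    (fun t ht ↦ (collarWidth_pos (arsinh_one_pos.trans ht)).le)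
    (fun s hs t ht ↦ lt_collarWidth_comm hs ht)
    collarWidth_arsinh_one collarWidth_arsinh_one
  rw [integral_Ioi_zero_collarWidth] at symmetric
  linarith

lemma hasDerivAt_collarWidth (hs : 0 < s) : HasDerivAt collarWidth (-(sinh s)⁻¹) s := by
  have sinh_pos : 0 < sinh s := sinh_pos_iff.2 hs
  have cosh_collarWidth : √(1 + (sinh s)⁻¹ ^ 2) = cosh s / sinh s := by
    rw [sqrt_eq_iff_mul_self_eq_of_pos (by positivity)]
    field_simp
    rw [cosh_sq, add_comm]
  refine ((hasDerivAt_sinh s).inv sinh_pos.ne').arsinh.congr_deriv ?_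
  rw [Pi.inv_apply, cosh_collarWidth, smul_eq_mul]
  field_simp

lemma tendsto_collarWidth_atTop : Tendsto collarWidth atTop (𝓝 0) := by
  have tendsto_sinh : Tendsto sinh atTop atTop :=
    tendsto_atTop_mono' _ ((eventually_ge_atTop 0).mono fun _ ↦ self_le_sinh_iff.2) tendsto_id
  simpa only [arsinh_zero] using! (tendsto_inv_atTop_zero.comp tendsto_sinh).arsinh

lemma integrableOn_and_integral_inv_sinh_mul_collarWidth {a : ℝ} (ha : 0 < a) :
    IntegrableOn (fun s ↦ (sinh s)⁻¹ * collarWidth s) (Ioi a) ∧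
      ∫ s in Ioi a, (sinh s)⁻¹ * collarWidth s = collarWidth a ^ 2 / 2 := by
  have hasDerivAt_primitive : ∀ s ∈ Ici a,
      HasDerivAt (fun s ↦ -(collarWidth s ^ 2 / 2)) ((sinh s)⁻¹ * collarWidth s) s := fun s hs ↦
    (((hasDerivAt_collarWidth (ha.trans_le hs)).pow 2).div_const 2).neg.congr_deriv
      (by push_cast; ring)
  have nonneg : ∀ s ∈ Ioi a, 0 ≤ (sinh s)⁻¹ * collarWidth s := fun s hs ↦
    have hs0 : 0 < s := ha.trans hs
    mul_nonneg (inv_nonneg.2 (sinh_nonneg_iff.2 hs0.le)) (collarWidth_pos hs0).le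
  have tendsto_primitive : Tendsto (fun s ↦ -(collarWidth s ^ 2 / 2)) atTop (𝓝 0) := by
    simpa using ((tendsto_collarWidth_atTop.pow 2).div_const 2).neg
  refine ⟨integrableOn_Ioi_deriv_of_nonneg' hasDerivAt_primitive nonneg tendsto_primitive, ?_⟩
  rw [integral_Ioi_of_hasDerivAt_of_nonneg' hasDerivAt_primitive nonneg tendsto_primitive]
  ring

end CollarWidth

section ChangeOfVariables

variable {s u v : ℝ}

lemma sinh_add_mul_sinh_sub (u v : ℝ) :
    sinh (u + v) * sinh (u - v) = sinh u ^ 2 - cosh v ^ 2 + 1 := by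
  rw [sinh_add, sinh_sub]
  linear_combination sinh u ^ 2 * cosh_sq v - sinh v ^ 2 * cosh_sq u + cosh_sq v

lemma sinh_eq_cosh_iff (hu : 0 ≤ u) : sinh u = cosh v ↔ sinh (u + v) * sinh (u - v) = 1 := by
  rw [sinh_add_mul_sinh_sub, ← sq_eq_sq₀ (sinh_nonneg_iff.2 hu) (cosh_pos v).le]
  constructor <;> intro h <;> linarith

lemma sinh_half_add_collarWidth (hs : 0 < s) :
    sinh ((s + collarWidth s) / 2) = cosh ((s - collarWidth s) / 2) := by
  have hsum : (s + collarWidth s) / 2 + (s - collarWidth s) / 2 = s := by ring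
  have hdiff : (s + collarWidth s) / 2 - (s - collarWidth s) / 2 = collarWidth s := by ring
  rw [sinh_eq_cosh_iff (half_pos (add_pos hs (collarWidth_pos hs))).le, hsum, hdiff,
    sinh_collarWidth, mul_inv_cancel₀ (sinh_pos_iff.2 hs).ne']

lemma arcosh_sinh_half_add_collarWidth (hs : arsinh 1 < s) :
    Real.arcosh (sinh ((s + collarWidth s) / 2)) = (s - collarWidth s) / 2 := by
  rw [sinh_half_add_collarWidth (arsinh_one_pos.trans hs),
    arcosh_cosh (half_pos (sub_pos.2 (collarWidth_lt_self hs))).le]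

lemma collarWidth_add_arcosh_sinh (hu : arsinh 1 < u) :
    collarWidth (u + Real.arcosh (sinh u)) = u - Real.arcosh (sinh u) := by
  have hu0 : 0 < u := arsinh_one_pos.trans hu
  exact collarWidth_eq_of_sinh_mul_sinh_eq_one <|
    (sinh_eq_cosh_iff hu0.le).1 (cosh_arcosh (one_lt_sinh hu).le).symm

lemma bijOn_half_add_collarWidth :
    BijOn (fun s ↦ (s + collarWidth s) / 2) (Ioi (arsinh 1)) (Ioi (arsinh 1)) := by
  refine InvOn.bijOn (f' := fun u ↦ u + Real.arcosh (sinh u)) ⟨fun s hs ↦ ?_, fun u hu ↦ ?_⟩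
    (fun s hs ↦ ?_) (fun u hu ↦ ?_)
  · simp only [arcosh_sinh_half_add_collarWidth hs]
    ring
  · simp only [collarWidth_add_arcosh_sinh hu]
    ring
  · rw [mem_Ioi, ← sinh_lt_sinh, sinh_arsinh,
      sinh_half_add_collarWidth (arsinh_one_pos.trans hs), one_lt_cosh]
    exact (half_pos (sub_pos.2 (collarWidth_lt_self hs))).ne'
  · exact lt_add_of_lt_of_nonneg hu (arcosh_nonneg (one_lt_sinh hu).le)

lemma integral_sub_arcosh_sinh_eq_integral_collarWidth :
    ∫ u in Ioi (arsinh 1), (u - Real.arcosh (sinh u)) =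
      ∫ s in Ioi (arsinh 1), (collarWidth s - (sinh s)⁻¹ * collarWidth s) / 2 := by
  have hasDerivAt_half_add : ∀ s ∈ Ioi (arsinh 1), HasDerivWithinAt
      (fun s ↦ (s + collarWidth s) / 2) ((1 + -(sinh s)⁻¹) / 2) (Ioi (arsinh 1)) s := fun s hs ↦
    have collar_deriv := hasDerivAt_collarWidth (arsinh_one_pos.trans hs)
    (((hasDerivAt_id s).add collar_deriv).div_const 2).hasDerivWithinAt
  nth_rw 1 [← bijOn_half_add_collarWidth.image_eq]
  rw [integral_image_eq_integral_abs_deriv_smul measurableSet_Ioi hasDerivAt_half_add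
    bijOn_half_add_collarWidth.injOn]
  refine setIntegral_congr_fun measurableSet_Ioi fun s hs ↦ ?_
  have deriv_nonneg : 0 ≤ (1 + -(sinh s)⁻¹) / 2 := by
    linarith [inv_lt_one_of_one_lt₀ (one_lt_sinh hs)]
  simp only [abs_of_nonneg deriv_nonneg, arcosh_sinh_half_add_collarWidth hs, smul_eq_mul]
  ring

end ChangeOfVariables

/-- With α = ln(1+√2), ∫_α^∞ [u − arcosh(sinh u)] du = π²/16 − (1/2)·ln²(1+√2). -/
theorem integral_id_sub_arcosh_sinh :
    (∫ u in Set.Ioi (Real.log (1 + Real.sqrt 2)), (u - arcosh (Real.sinh u))) =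
      Real.pi ^ 2 / 16 - (1 / 2) * Real.log (1 + Real.sqrt 2) ^ 2 := by
  have hα : log (1 + √2) = arsinh 1 := by rw [arsinh, one_pow, one_add_one_eq_two]
  have harcosh : arcosh = Real.arcosh := rfl
  obtain ⟨integrable_div_sinh, integral_div_sinh⟩ :=
    integrableOn_and_integral_inv_sinh_mul_collarWidth arsinh_one_pos
  rw [hα, harcosh, integral_sub_arcosh_sinh_eq_integral_collarWidth, integral_div,
    integral_sub integrableOn_Ioi_arsinh_one_collarWidth integrable_div_sinh,
    integral_Ioi_arsinh_one_collarWidth, integral_div_sinh, collarWidth_arsinh_one]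
  ring
end

section
/- With α = ln(1+√2), the integral ∫_{√2−1}^1 (ln t)/(1 − t²) dt equals α²/4 − π²/16. -/
/-!
The substitution `s = (1 - t) / (1 + t)` sends `artanh s` to `-(log t) / 2`, so
`t ↦ χ₂ ((1 - t) / (1 + t))`, with `χ₂` the Legendre chi function, is a primitive of
`log t / (1 - t ^ 2)` that vanishes at `t = 1`. The function
`χ₂ x + χ₂ ((1 - x) / (1 + x)) - log x * artanh x` has zero derivative on `(0, 1)`, and its limit
at `0` is `χ₂ 1 = π ^ 2 / 8`. Since `√2 - 1` is the fixed point of the substitution, this identity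
determines `χ₂ (√2 - 1)`.
-/

open Real Set Filter Topology MeasureTheory

section LegendreChi

/-- The Legendre chi function `χₙ` of natural order `n` at a real argument, defined by its power
series. It is meaningful only where the series converges; elsewhere `tsum` gives `0`. -/
noncomputable def legendreChi (n : ℕ) (x : ℝ) : ℝ :=
  ∑' k : ℕ, x ^ (2 * k + 1) / (2 * (k : ℝ) + 1) ^ n

variable {n : ℕ} {x : ℝ}

@[simp]
lemma legendreChi_zero_right (n : ℕ) : legendreChi n 0 = 0 := by
  simp [legendreChi]

lemma abs_pow_div_odd_pow_le (n m k : ℕ) (x : ℝ) :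
    |x ^ m / (2 * (k : ℝ) + 1) ^ n| ≤ |x| ^ m := by
  rw [abs_div, abs_pow, abs_of_pos (by positivity : (0 : ℝ) < (2 * k + 1) ^ n)]
  exact div_le_self (by positivity) (one_le_pow₀ (by linarith [k.cast_nonneg (α := ℝ)]))

lemma summable_legendreChi (n : ℕ) (hx : |x| < 1) :
    Summable fun k : ℕ ↦ x ^ (2 * k + 1) / (2 * (k : ℝ) + 1) ^ n := by
  refine .of_norm_bounded (summable_geometric_of_lt_one (abs_nonneg x) hx) fun k ↦ ?_
  exact (abs_pow_div_odd_pow_le n (2 * k + 1) k x).trans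
    (pow_le_pow_of_le_one (abs_nonneg x) hx.le (by lia))

lemma hasDerivAt_legendreChi_succ (n : ℕ) (hx : |x| < 1) (hx₀ : x ≠ 0) :
    HasDerivAt (legendreChi (n + 1)) (legendreChi n x / x) x := by
  obtain ⟨r, hxr, hr⟩ := exists_between hx
  have hr₀ : 0 ≤ r := (abs_nonneg x).trans hxr.le
  have hterm (k : ℕ) (y : ℝ) :
      HasDerivAt (fun z : ℝ ↦ z ^ (2 * k + 1) / (2 * (k : ℝ) + 1) ^ (n + 1))
        (y ^ (2 * k) / (2 * (k : ℝ) + 1) ^ n) y := by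
    refine ((hasDerivAt_pow (2 * k + 1) y).div_const _).congr_deriv ?_
    push_cast
    field_simp
    ring
  have hbound (k : ℕ) (y : ℝ) (hy : y ∈ Ioo (-r) r) :
      ‖y ^ (2 * k) / (2 * (k : ℝ) + 1) ^ n‖ ≤ (r ^ 2) ^ k :=
    calc ‖y ^ (2 * k) / (2 * (k : ℝ) + 1) ^ n‖ ≤ |y| ^ (2 * k) := abs_pow_div_odd_pow_le n _ k y
      _ ≤ r ^ (2 * k) := by gcongr; exact (abs_lt.2 hy).le
      _ = (r ^ 2) ^ k := pow_mul r 2 k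
  have hgeom : Summable fun k : ℕ ↦ (r ^ 2) ^ k :=
    summable_geometric_of_lt_one (sq_nonneg r) (pow_lt_one₀ hr₀ hr two_ne_zero)
  refine (hasDerivAt_tsum_of_isPreconnected hgeom isOpen_Ioo isPreconnected_Ioo
    (fun k y _ ↦ hterm k y) hbound (abs_lt.1 hxr) (summable_legendreChi (n + 1) hx)
    (abs_lt.1 hxr)).congr_deriv ?_
  rw [legendreChi, ← tsum_div_const]
  refine tsum_congr fun k ↦ ?_
  field_simp
  rw [pow_succ]

lemma legendreChi_one_left (hx : |x| < 1) : legendreChi 1 x = artanh x := by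
  rw [artanh_eq_half_log (Ioo_subset_Icc_self (abs_lt.1 hx)),
    log_div (by linarith [neg_abs_le x]) (by linarith [le_abs_self x])]
  refine (((hasSum_log_sub_log_of_abs_lt_one hx).mul_left (1 / 2)).congr_fun fun k ↦ ?_).tsum_eq
  ring

lemma summable_one_div_odd_pow (hn : 1 < n) :
    Summable fun k : ℕ ↦ 1 / (2 * (k : ℝ) + 1) ^ n := by
  have hodd : Function.Injective fun k : ℕ ↦ 2 * k + 1 := fun i j hij ↦ by simpa using hij
  simpa [Function.comp_def] using (summable_one_div_nat_pow.2 hn).comp_injective hodd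

lemma continuousOn_legendreChi (hn : 1 < n) : ContinuousOn (legendreChi n) (Icc (-1) 1) := by
  refine continuousOn_tsum (fun k ↦ by fun_prop) (summable_one_div_odd_pow hn) fun k x hx ↦ ?_
  rw [norm_div, norm_pow, norm_of_nonneg (by positivity : (0 : ℝ) ≤ (2 * k + 1) ^ n)]
  gcongr
  exact pow_le_one₀ (norm_nonneg x) (abs_le.2 hx)

lemma legendreChi_two_one : legendreChi 2 1 = π ^ 2 / 8 := by
  have heven : HasSum (fun k : ℕ ↦ 1 / ((2 * k : ℕ) : ℝ) ^ 2) (π ^ 2 / 6 / 4) := by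
    refine (hasSum_zeta_two.div_const 4).congr_fun fun k ↦ ?_
    push_cast
    ring
  have hodd : HasSum (fun k : ℕ ↦ 1 / ((2 * k + 1 : ℕ) : ℝ) ^ 2) (legendreChi 2 1) := by
    simpa [legendreChi] using (summable_one_div_odd_pow one_lt_two).hasSum
  have hsum : π ^ 2 / 6 / 4 + legendreChi 2 1 = π ^ 2 / 6 :=
    (HasSum.even_add_odd (f := fun k : ℕ ↦ 1 / (k : ℝ) ^ 2) heven hodd).unique hasSum_zeta_two
  linarith

end LegendreChi

section Artanh

variable {x : ℝ}

lemma hasDerivAt_artanh (hx : x ∈ Ioo (-1) 1) : HasDerivAt artanh (1 / (1 - x ^ 2)) x := by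
  have hadd : 1 + x ≠ 0 := by linarith [hx.1]
  have hsub : 1 - x ≠ 0 := by linarith [hx.2]
  have hlog : HasDerivAt (fun y ↦ 1 / 2 * (log (1 + y) - log (1 - y))) (1 / (1 - x ^ 2)) x := by
    refine (((((hasDerivAt_id x).const_add 1).log hadd).sub
      (((hasDerivAt_id x).const_sub 1).log hsub)).const_mul (1 / 2)).congr_deriv ?_
    rw [show 1 - x ^ 2 = (1 + x) * (1 - x) by ring]
    simp only [id]
    field_simp
    ring
  refine hlog.congr_of_eventuallyEq ?_
  filter_upwards [Ioo_mem_nhds hx.1 hx.2] with y hy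
  rw [artanh_eq_half_log (Ioo_subset_Icc_self hy),
    log_div (by linarith [hy.1]) (by linarith [hy.2])]

lemma tendsto_log_mul_artanh_nhdsGT_zero :
    Tendsto (fun x ↦ log x * artanh x) (𝓝[>] 0) (𝓝 0) := by
  have hO : artanh =O[𝓝[>] 0] fun x ↦ x := by
    simpa using (hasDerivAt_artanh (x := 0) (by norm_num)).isBigO_sub.mono nhdsWithin_le_nhds
  refine ((Asymptotics.isBigO_refl log _).mul hO).trans_tendsto ?_
  simpa using tendsto_log_mul_rpow_nhdsGT_zero one_pos

end Artanh

section Involution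

variable {t : ℝ}

lemma one_sub_div_one_add_mem_Ioc (ht : 0 ≤ t) : (1 - t) / (1 + t) ∈ Ioc (-1) 1 := by
  constructor
  · rw [lt_div_iff₀ (by positivity)]
    linarith
  · rw [div_le_one (by positivity)]
    linarith

lemma abs_one_sub_div_one_add_lt_one (ht : 0 < t) : |(1 - t) / (1 + t)| < 1 := by
  refine abs_lt.2 ⟨(one_sub_div_one_add_mem_Ioc ht.le).1, ?_⟩
  rw [div_lt_one (by positivity)]
  linarith

lemma artanh_one_sub_div_one_add (ht : 0 < t) : artanh ((1 - t) / (1 + t)) = -log t / 2 := by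
  have hquot : (1 + (1 - t) / (1 + t)) / (1 - (1 - t) / (1 + t)) = t⁻¹ := by
    rw [one_add_div (by positivity), one_sub_div (by positivity)]
    ring_nf
    field_simp
  rw [artanh_eq_half_log (Ioc_subset_Icc_self (one_sub_div_one_add_mem_Ioc ht.le)), hquot, log_inv]
  ring

lemma hasDerivAt_one_sub_div_one_add (ht : 1 + t ≠ 0) :
    HasDerivAt (fun s : ℝ ↦ (1 - s) / (1 + s)) (-2 / (1 + t) ^ 2) t := by
  refine (((hasDerivAt_id t).const_sub 1).div ((hasDerivAt_id t).const_add 1) ht).congr_deriv ?_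
  simp only [id]
  ring

lemma continuousOn_legendreChi_one_sub_div_one_add :
    ContinuousOn (fun t ↦ legendreChi 2 ((1 - t) / (1 + t))) (Ici 0) := by
  refine (continuousOn_legendreChi one_lt_two).comp
    (fun t ht ↦ ?_) fun t ht ↦ Ioc_subset_Icc_self (one_sub_div_one_add_mem_Ioc ht)
  have : 1 + t ≠ 0 := by linarith [mem_Ici.1 ht]
  exact (hasDerivAt_one_sub_div_one_add this).continuousAt.continuousWithinAt

lemma hasDerivAt_legendreChi_one_sub_div_one_add (ht : 0 < t) (ht₁ : t ≠ 1) :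
    HasDerivAt (fun s ↦ legendreChi 2 ((1 - s) / (1 + s))) (log t / (1 - t ^ 2)) t := by
  have hadd : 1 + t ≠ 0 := by positivity
  have hsub : 1 - t ≠ 0 := sub_ne_zero.2 ht₁.symm
  have habs := abs_one_sub_div_one_add_lt_one ht
  refine ((hasDerivAt_legendreChi_succ 1 habs (div_ne_zero hsub hadd)).comp t
    (hasDerivAt_one_sub_div_one_add hadd)).congr_deriv ?_
  rw [legendreChi_one_left habs, artanh_one_sub_div_one_add ht,
    show 1 - t ^ 2 = (1 - t) * (1 + t) by ring]
  field_simp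

end Involution

theorem legendreChi_two_add_legendreChi_two {x : ℝ} (hx : x ∈ Ioo 0 1) :
    legendreChi 2 x + legendreChi 2 ((1 - x) / (1 + x)) = π ^ 2 / 8 + log x * artanh x := by
  set F : ℝ → ℝ := fun t ↦
    legendreChi 2 t + legendreChi 2 ((1 - t) / (1 + t)) - log t * artanh t
  have hderiv (t : ℝ) (ht : t ∈ Ioo 0 1) : HasDerivAt F 0 t := by
    have ht' : t ∈ Ioo (-1) 1 := ⟨by linarith [ht.1], ht.2⟩
    refine (((hasDerivAt_legendreChi_succ 1 (abs_lt.2 ht') ht.1.ne').add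
      (hasDerivAt_legendreChi_one_sub_div_one_add ht.1 ht.2.ne)).sub
      ((hasDerivAt_log ht.1.ne').mul (hasDerivAt_artanh ht'))).congr_deriv ?_
    rw [legendreChi_one_left (abs_lt.2 ht')]
    ring
  have hconst : ∀ᶠ t in 𝓝[>] 0, F t = F x := by
    filter_upwards [Ioo_mem_nhdsGT one_pos] with t ht
    exact isOpen_Ioo.is_const_of_deriv_eq_zero isPreconnected_Ioo
      (fun s hs ↦ (hderiv s hs).differentiableAt.differentiableWithinAt)
      (fun s hs ↦ (hderiv s hs).deriv) ht hx
  have hchi : Tendsto (legendreChi 2) (𝓝[>] 0) (𝓝 (legendreChi 2 0)) :=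
    ((continuousOn_legendreChi one_lt_two).continuousAt
      (Icc_mem_nhds (by norm_num) (by norm_num))).mono_left nhdsWithin_le_nhds
  have hchi' : Tendsto (fun t ↦ legendreChi 2 ((1 - t) / (1 + t))) (𝓝[>] 0)
      (𝓝 (legendreChi 2 ((1 - 0) / (1 + 0)))) :=
    (continuousOn_legendreChi_one_sub_div_one_add 0 self_mem_Ici).mono_left
      (nhdsWithin_mono 0 Ioi_subset_Ici_self)
  have hlim : Tendsto F (𝓝[>] 0) (𝓝 (π ^ 2 / 8)) := by
    simpa [legendreChi_two_one] using (hchi.add hchi').sub tendsto_log_mul_artanh_nhdsGT_zero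
  have hFx : F x = π ^ 2 / 8 :=
    tendsto_nhds_unique (tendsto_const_nhds.congr' (hconst.mono fun _ h ↦ h.symm)) hlim
  linarith

lemma log_div_one_sub_sq_nonpos {t : ℝ} (ht : 0 ≤ t) : log t / (1 - t ^ 2) ≤ 0 := by
  rcases le_total t 1 with h | h
  · exact div_nonpos_of_nonpos_of_nonneg (log_nonpos ht h) (by nlinarith)
  · exact div_nonpos_of_nonneg_of_nonpos (log_nonneg h) (by nlinarith)

theorem integral_log_div_one_sub_sq_eq_neg_legendreChi {a : ℝ} (ha : 0 ≤ a) :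
    ∫ t in a..1, log t / (1 - t ^ 2) = -legendreChi 2 ((1 - a) / (1 + a)) := by
  have hpos {t : ℝ} (ht : t ∈ Ioo (min a 1) (max a 1)) : 0 < t :=
    (le_min ha zero_le_one).trans_lt ht.1
  have hcont : ContinuousOn (fun t ↦ legendreChi 2 ((1 - t) / (1 + t))) (uIcc a 1) :=
    continuousOn_legendreChi_one_sub_div_one_add.mono fun t ht ↦ (le_min ha zero_le_one).trans ht.1
  have hderiv (t : ℝ) (ht : t ∈ Ioo (min a 1) (max a 1)) :
      HasDerivAt (fun s ↦ legendreChi 2 ((1 - s) / (1 + s))) (log t / (1 - t ^ 2)) t :=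
    hasDerivAt_legendreChi_one_sub_div_one_add (hpos ht) (by grind)
  have hint : IntervalIntegrable (fun t ↦ log t / (1 - t ^ 2)) volume a 1 := by
    rw [← neg_neg fun t : ℝ ↦ log t / (1 - t ^ 2)]
    exact (intervalIntegral.intervalIntegrable_deriv_of_nonneg hcont.neg
      (fun t ht ↦ (hderiv t ht).neg)
      fun t ht ↦ neg_nonneg.2 (log_div_one_sub_sq_nonpos (hpos ht).le)).neg
  rw [intervalIntegral.integral_eq_sub_of_hasDeriv_right hcont
    (fun t ht ↦ (hderiv t ht).hasDerivWithinAt) hint]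
  simp

section SqrtTwoSubOne

lemma sqrt_two_sub_one_mem_Ioo : √2 - 1 ∈ Ioo 0 1 :=
  ⟨sub_pos.2 one_lt_sqrt_two, by linarith [sqrt_two_lt_three_halves]⟩

lemma one_sub_div_one_add_sqrt_two_sub_one : (1 - (√2 - 1)) / (1 + (√2 - 1)) = √2 - 1 := by
  rw [add_sub_cancel, div_eq_iff (by positivity)]
  linarith [mul_self_sqrt zero_le_two]

lemma log_sqrt_two_sub_one : log (√2 - 1) = -log (1 + √2) := by
  rw [add_comm, ← inv_sqrt_two_sub_one, log_inv, neg_neg]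

lemma legendreChi_two_sqrt_two_sub_one :
    legendreChi 2 (√2 - 1) = π ^ 2 / 16 - log (1 + √2) ^ 2 / 4 := by
  have hartanh := artanh_one_sub_div_one_add sqrt_two_sub_one_mem_Ioo.1
  have hchi := legendreChi_two_add_legendreChi_two sqrt_two_sub_one_mem_Ioo
  rw [one_sub_div_one_add_sqrt_two_sub_one] at hartanh hchi
  rw [hartanh, log_sqrt_two_sub_one] at hchi
  linarith

end SqrtTwoSubOne

/-- With α = ln(1+√2), ∫_{√2−1}^1 (ln t)/(1 − t²) dt = α²/4 − π²/16. -/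
theorem integral_log_div_one_sub_sq :
    (∫ t in (Real.sqrt 2 - 1)..1, Real.log t / (1 - t ^ 2)) =
      Real.log (1 + Real.sqrt 2) ^ 2 / 4 - Real.pi ^ 2 / 16 := by
  rw [integral_log_div_one_sub_sq_eq_neg_legendreChi sqrt_two_sub_one_mem_Ioo.1.le,
    one_sub_div_one_add_sqrt_two_sub_one, legendreChi_two_sqrt_two_sub_one]
  ring
end
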